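/- Let p be a prime and let C and E be bounded, rationally acyclic cochain complexes of finitely generated free abelian groups, each with a chain automorphism σ satisfying σ^p = id, and suppose there exist σ-commuting chain maps f : C → E and g : E → C that are mutually inverse up to σ-commuting chain homotopies. Then the naive equivariant Reidemeister torsions agree: Σ_i (−1)^i [ (p−1)·log|H^i(C^{σ−1})| − log|H^i(C^{P(σ)})| + (p−1)·log|H^i(C')| ] = Σ_i (−1)^i [ (p−1)·log|H^i(E^{σ−1})| − log|H^i(E^{P(σ)})| + (p−1)·log|H^i(E')| ], where all the cohomology groups appearing are finite and |·| denotes cardinality. -/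

import Mathlib

open CategoryTheory CategoryTheory.Limits MonoidalCategory

/-- The complex `C ⊗ ℚ` obtained by tensoring a cochain complex of abelian groups with ℚ. -/
noncomputable def tensorQ (C : CochainComplex (ModuleCat ℤ) ℤ) :
    CochainComplex (ModuleCat ℤ) ℤ :=
  ((tensorRight (ModuleCat.of ℤ ℚ)).mapHomologicalComplex (ComplexShape.up ℤ)).obj C

/-- The cardinality of the `i`-th cohomology group of a cochain complex of abelian groups. -/
noncomputable def Hcard (i : ℤ) (X : CochainComplex (ModuleCat ℤ) ℤ) : ℕ :=
  Nat.card ((HomologicalComplex.homologyFunctor (ModuleCat ℤ) (ComplexShape.up ℤ) i).obj X)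

/-- The subcomplex `C^{σ−1}`, the degreewise kernel of `σ − 1`. -/
noncomputable def fixCx (C : CochainComplex (ModuleCat ℤ) ℤ) (σ : End C) :
    CochainComplex (ModuleCat ℤ) ℤ := kernel (σ - 1)

/-- The subcomplex `C^{P(σ)}`, the degreewise kernel of `P(σ) = 1 + σ + ⋯ + σ^{p−1}`. -/
noncomputable def cycCx (p : ℕ) (C : CochainComplex (ModuleCat ℤ) ℤ) (σ : End C) :
    CochainComplex (ModuleCat ℤ) ℤ := kernel (∑ k ∈ Finset.range p, σ ^ k)

/-- The quotient complex `C' = C / (C^{σ−1} ⊕ C^{P(σ)})`. -/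
noncomputable def quotCx (p : ℕ) (C : CochainComplex (ModuleCat ℤ) ℤ) (σ : End C) :
    CochainComplex (ModuleCat ℤ) ℤ :=
  cokernel (biprod.desc (kernel.ι (σ - 1)) (kernel.ι (∑ k ∈ Finset.range p, σ ^ k)))

/-- The naive equivariant Reidemeister torsion (multiplied by `p − 1`):
`Σ_i (−1)^i [ (p−1)·log|H^i(C^{σ−1})| − log|H^i(C^{P(σ)})| + (p−1)·log|H^i(C')| ]`. -/
noncomputable def nrt (p : ℕ) (C : CochainComplex (ModuleCat ℤ) ℤ) (σ : End C) : ℝ :=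
  ∑ᶠ i : ℤ, (-1 : ℝ) ^ i *
    (((p : ℝ) - 1) * Real.log (Hcard i (fixCx C σ))
      - Real.log (Hcard i (cycCx p C σ))
      + ((p : ℝ) - 1) * Real.log (Hcard i (quotCx p C σ)))

/-!
The pairs of endomorphisms of `C` and `E` compatible with the two chain maps and the two homotopies
form a ring. As it contains the pair of the two `σ`s, it contains the pairs formed by `σ - 1` and by
`P(σ)`, so the homotopy equivalence restricts to the kernels of these maps and descends to the
quotients `C'` and `E'`. Hence the cohomology groups of the three complexes agree degree by degree.

For finiteness, `H^i(C)` is torsion because `ℚ` is flat over `ℤ`. The map `P(σ)` sends `C` into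
`ker (σ - 1)` and is multiplication by `p` there; `p - P(σ)` does the same for `ker P(σ)`. Both
kernels are thus retracts of `C` up to the factor `p`, so their cohomology is torsion as well, and
`p = P(σ) + (p - P(σ))` takes values in the sum of the two kernels, that is, it kills the quotient.
-/

section Homotopy

variable {ι V : Type*} [Category* V] {c : ComplexShape ι}

section Preadditive

variable [Preadditive V] {K L M : HomologicalComplex V c}

/-- A homotopy after composing with a degreewise monomorphism `m : L ⟶ M` is a homotopy as soon as
its components factor through `m`. -/
def homotopyOfCompMono (m : L ⟶ M) [∀ i, Mono (m.f i)] {k l : K ⟶ L}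
    (H : Homotopy (k ≫ m) (l ≫ m)) (s : ∀ i j, K.X i ⟶ L.X j)
    (hs : ∀ i j, s i j ≫ m.f j = H.hom i j) : Homotopy k l where
  hom := s
  zero i j hij := by rw [← cancel_mono (m.f j), hs, H.zero i j hij, zero_comp]
  comm i := by
    have hH : H.hom = fun i j => s i j ≫ m.f j := funext₂ fun i j => (hs i j).symm
    rw [← cancel_mono (m.f i), ← HomologicalComplex.comp_f, H.comm, hH, dNext_comp_right,
      prevD_comp_right, Preadditive.add_comp, Preadditive.add_comp, HomologicalComplex.comp_f]

/-- A homotopy after precomposing with a degreewise epimorphism `m : K ⟶ L` is a homotopy as soon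
as its components factor through `m`. -/
def homotopyOfEpiComp (m : K ⟶ L) [∀ i, Epi (m.f i)] {k l : L ⟶ M}
    (H : Homotopy (m ≫ k) (m ≫ l)) (s : ∀ i j, L.X i ⟶ M.X j)
    (hs : ∀ i j, m.f i ≫ s i j = H.hom i j) : Homotopy k l where
  hom := s
  zero i j hij := by rw [← cancel_epi (m.f i), hs, H.zero i j hij, comp_zero]
  comm i := by
    have hH : H.hom = fun i j => m.f i ≫ s i j := funext₂ fun i j => (hs i j).symm
    rw [← cancel_epi (m.f i), ← HomologicalComplex.comp_f, H.comm, hH, dNext_comp_left,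
      prevD_comp_left, Preadditive.comp_add, Preadditive.comp_add, HomologicalComplex.comp_f]

end Preadditive

section Abelian

variable [Abelian V] {A B C D E : HomologicalComplex V c}

lemma exists_comp_kernel_ι_f_eq (φ : C ⟶ D) {X : V} {j : ι} (x : X ⟶ C.X j)
    (hx : x ≫ φ.f j = 0) : ∃ y : X ⟶ (kernel φ).X j, y ≫ (kernel.ι φ).f j = x :=
  let y := KernelFork.IsLimit.lift'
    (KernelFork.mapIsLimit _ (kernelIsKernel φ) (HomologicalComplex.eval V c j)) x hx
  ⟨y.1, y.2⟩

lemma exists_cokernel_π_f_comp_eq (m : B ⟶ C) {X : V} {i : ι} (x : C.X i ⟶ X)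
    (hx : m.f i ≫ x = 0) : ∃ y : (cokernel m).X i ⟶ X, (cokernel.π m).f i ≫ y = x :=
  let y := CokernelCofork.IsColimit.desc'
    (CokernelCofork.mapIsColimit _ (cokernelIsCokernel m) (HomologicalComplex.eval V c i)) x hx
  ⟨y.1, y.2⟩

lemma nonempty_homotopy_of_comp_kernel_ι {φ : C ⟶ D} {k l : B ⟶ kernel φ}
    {u v : B ⟶ C} (H : Homotopy u v) (hk : k ≫ kernel.ι φ = u) (hl : l ≫ kernel.ι φ = v)
    (hH : ∀ i j, H.hom i j ≫ φ.f j = 0) : Nonempty (Homotopy k l) := by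
  subst hk hl
  choose s hs using fun i j => exists_comp_kernel_ι_f_eq φ (H.hom i j) (hH i j)
  exact ⟨homotopyOfCompMono (kernel.ι φ) H s hs⟩

lemma nonempty_homotopy_of_cokernel_π_comp {m : B ⟶ C} {k l : cokernel m ⟶ D}
    {u v : C ⟶ D} (H : Homotopy u v) (hk : cokernel.π m ≫ k = u) (hl : cokernel.π m ≫ l = v)
    (hH : ∀ i j, m.f i ≫ H.hom i j = 0) : Nonempty (Homotopy k l) := by
  subst hk hl
  choose s hs using fun i j => exists_cokernel_π_f_comp_eq m (H.hom i j) (hH i j)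
  exact ⟨homotopyOfEpiComp (cokernel.π m) H s hs⟩

lemma nonempty_homotopyEquiv_kernel (e : HomotopyEquiv C E)
    {φ : C ⟶ A} {ψ : E ⟶ B}
    (hom_lift : kernel.ι φ ≫ e.hom ≫ ψ = 0) (inv_lift : kernel.ι ψ ≫ e.inv ≫ φ = 0)
    (left_lift : ∀ i j, (kernel.ι φ).f i ≫ e.homotopyHomInvId.hom i j ≫ φ.f j = 0)
    (right_lift : ∀ i j, (kernel.ι ψ).f i ≫ e.homotopyInvHomId.hom i j ≫ ψ.f j = 0) :
    Nonempty (HomotopyEquiv (kernel φ) (kernel ψ)) := by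
  let F : kernel φ ⟶ kernel ψ := kernel.lift ψ (kernel.ι φ ≫ e.hom) (by simpa using hom_lift)
  let G : kernel ψ ⟶ kernel φ := kernel.lift φ (kernel.ι ψ ≫ e.inv) (by simpa using inv_lift)
  obtain ⟨left⟩ := nonempty_homotopy_of_comp_kernel_ι (k := F ≫ G) (l := 𝟙 _)
    (e.homotopyHomInvId.compLeft (kernel.ι φ)) (by simp [F, G]) (by simp)
    (by simpa using left_lift)
  obtain ⟨right⟩ := nonempty_homotopy_of_comp_kernel_ι (k := G ≫ F) (l := 𝟙 _)
    (e.homotopyInvHomId.compLeft (kernel.ι ψ)) (by simp [F, G]) (by simp)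
    (by simpa using right_lift)
  exact ⟨⟨F, G, left, right⟩⟩

lemma nonempty_homotopyEquiv_cokernel (e : HomotopyEquiv C E)
    {m : A ⟶ C} {n : B ⟶ E}
    (hom_desc : m ≫ e.hom ≫ cokernel.π n = 0) (inv_desc : n ≫ e.inv ≫ cokernel.π m = 0)
    (left_desc : ∀ i j, m.f i ≫ e.homotopyHomInvId.hom i j ≫ (cokernel.π m).f j = 0)
    (right_desc : ∀ i j, n.f i ≫ e.homotopyInvHomId.hom i j ≫ (cokernel.π n).f j = 0) :
    Nonempty (HomotopyEquiv (cokernel m) (cokernel n)) := by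
  let F : cokernel m ⟶ cokernel n := cokernel.desc m (e.hom ≫ cokernel.π n) hom_desc
  let G : cokernel n ⟶ cokernel m := cokernel.desc n (e.inv ≫ cokernel.π m) inv_desc
  obtain ⟨left⟩ := nonempty_homotopy_of_cokernel_π_comp (k := F ≫ G) (l := 𝟙 _)
    (e.homotopyHomInvId.compRight (cokernel.π m)) (by simp [F, G]) (by simp) left_desc
  obtain ⟨right⟩ := nonempty_homotopy_of_cokernel_π_comp (k := G ≫ F) (l := 𝟙 _)
    (e.homotopyInvHomId.compRight (cokernel.π n)) (by simp [F, G]) (by simp) right_desc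
  exact ⟨⟨F, G, left, right⟩⟩

end Abelian

end Homotopy

section Equivariance

section Intertwiners

variable {V : Type*} [Category* V] [Preadditive V]

/-- The pairs of endomorphisms intertwined by a morphism `f`. They form a subring, so a morphism
that intertwines `σ` and `τ` intertwines every integral polynomial in them. -/
def intertwiners {X Y : V} (f : X ⟶ Y) : Subring (End X × End Y) where
  carrier := {φ | f ≫ φ.2 = φ.1 ≫ f}
  one_mem' := (Category.comp_id f).trans (Category.id_comp f).symm
  mul_mem' {φ ψ} hφ hψ := by
    change f ≫ ψ.2 ≫ φ.2 = (ψ.1 ≫ φ.1) ≫ f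
    rw [← Category.assoc, hψ, Category.assoc, hφ, Category.assoc]
  zero_mem' := comp_zero.trans zero_comp.symm
  add_mem' {φ ψ} hφ hψ := by
    change f ≫ (φ.2 + ψ.2) = (φ.1 + ψ.1) ≫ f
    rw [Preadditive.comp_add, Preadditive.add_comp, hφ, hψ]
  neg_mem' {φ} hφ := by
    change f ≫ (-φ.2) = (-φ.1) ≫ f
    rw [Preadditive.comp_neg, Preadditive.neg_comp, hφ]

/-- The action of an additive functor on endomorphism rings. -/
def mapEndRingHom {W : Type*} [Category* W] [Preadditive W] (F : V ⥤ W) [F.Additive] (X : V) :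
    End X →+* End (F.obj X) :=
  { F.mapEnd X with
    map_zero' := F.map_zero X X
    map_add' := fun _ _ => F.map_add }

variable {ι : Type*} {c : ComplexShape ι} {C E : HomologicalComplex V c}

/-- The pairs `(φ, ψ)` of endomorphisms for which a homotopy equivalence `e` is equivariant: both
chain maps intertwine `φ` and `ψ`, and the two homotopies commute with `φ` and `ψ`. -/
def equivariantPairs (e : HomotopyEquiv C E) : Subring (End C × End E) :=
  let eval (K : HomologicalComplex V c) (i j : ι) : End K →+* End (K.X i) × End (K.X j) :=
    (mapEndRingHom (HomologicalComplex.eval V c i) K).prod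
      (mapEndRingHom (HomologicalComplex.eval V c j) K)
  intertwiners e.hom ⊓
    (intertwiners e.inv).comap (RingEquiv.prodComm (R := End C) (S := End E)).toRingHom ⊓
    (⨅ i, ⨅ j, (intertwiners (e.homotopyHomInvId.hom i j)).comap
      ((eval C i j).comp (RingHom.fst _ _))) ⊓
    ⨅ i, ⨅ j, (intertwiners (e.homotopyInvHomId.hom i j)).comap
      ((eval E i j).comp (RingHom.snd _ _))

lemma mem_equivariantPairs {e : HomotopyEquiv C E} {φ : C ⟶ C} {ψ : E ⟶ E} :
    ((φ, ψ) : End C × End E) ∈ equivariantPairs e ↔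
      e.hom ≫ ψ = φ ≫ e.hom ∧ e.inv ≫ φ = ψ ≫ e.inv ∧
      (∀ i j, φ.f i ≫ e.homotopyHomInvId.hom i j = e.homotopyHomInvId.hom i j ≫ φ.f j) ∧
      ∀ i j, ψ.f i ≫ e.homotopyInvHomId.hom i j = e.homotopyInvHomId.hom i j ≫ ψ.f j := by
  simp only [equivariantPairs, Subring.mem_inf, Subring.mem_iInf, Subring.mem_comap, and_assoc]
  exact Iff.and Iff.rfl <| Iff.and Iff.rfl <| Iff.and (forall₂_congr fun _ _ => eq_comm)
    (forall₂_congr fun _ _ => eq_comm)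

end Intertwiners

section Abelian

variable {V : Type*} [Category* V] [Abelian V]

lemma left_comp_cokernel_π_biprod_desc {X Y Z : V} (a : X ⟶ Z) (b : Y ⟶ Z) :
    a ≫ cokernel.π (biprod.desc a b) = 0 := by
  rw [← biprod.inl_desc_assoc a b, cokernel.condition, comp_zero]

lemma right_comp_cokernel_π_biprod_desc {X Y Z : V} (a : X ⟶ Z) (b : Y ⟶ Z) :
    b ≫ cokernel.π (biprod.desc a b) = 0 := by
  rw [← biprod.inr_desc_assoc a b, cokernel.condition, comp_zero]

/-- The quotient of `X` by the sum of the kernels of two endomorphisms; `quotCx` is the case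
`φ = σ - 1`, `ψ = P(σ)`. -/
noncomputable abbrev kernelSumQuotient {X : V} (φ ψ : X ⟶ X) : V :=
  cokernel (biprod.desc (kernel.ι φ) (kernel.ι ψ))

lemma comp_eq_zero_of_kernel_ι_comp_eq_zero {W X Y Z : V} {φ : X ⟶ Y} {π : X ⟶ Z}
    (hπ : kernel.ι φ ≫ π = 0) {x : W ⟶ X} (hx : x ≫ φ = 0) : x ≫ π = 0 := by
  rw [← kernel.lift_ι φ x hx, Category.assoc, hπ, comp_zero]

lemma kernel_ι_comp_comp_eq_zero {X Y : V} {φ : X ⟶ X} {ψ : Y ⟶ Y} {f : X ⟶ Y}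
    (hf : f ≫ ψ = φ ≫ f) : kernel.ι φ ≫ f ≫ ψ = 0 := by
  rw [hf, kernel.condition_assoc, zero_comp]

variable {ι : Type*} {c : ComplexShape ι} {A B C D E Q : HomologicalComplex V c}

lemma biprod_desc_f_comp_eq_zero {a : A ⟶ C} {b : B ⟶ C} {i : ι} {X : V} {x : C.X i ⟶ X}
    (ha : a.f i ≫ x = 0) (hb : b.f i ≫ x = 0) : (biprod.desc a b).f i ≫ x = 0 := by
  rw [biprod.desc_eq, HomologicalComplex.add_f_apply, HomologicalComplex.comp_f,
    HomologicalComplex.comp_f, Preadditive.add_comp, Category.assoc, Category.assoc, ha, hb,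
    comp_zero, comp_zero, add_zero]

lemma comp_f_eq_zero_of_kernel_ι_comp_eq_zero {φ : C ⟶ D} {π : C ⟶ Q}
    (hπ : kernel.ι φ ≫ π = 0) {X : V} {j : ι} {x : X ⟶ C.X j} (hx : x ≫ φ.f j = 0) :
    x ≫ π.f j = 0 := by
  obtain ⟨y, rfl⟩ := exists_comp_kernel_ι_f_eq φ x hx
  rw [Category.assoc, ← HomologicalComplex.comp_f, hπ, HomologicalComplex.zero_f, comp_zero]

lemma kernel_ι_f_comp_comp_eq_zero {φ : C ⟶ C} {ψ : E ⟶ E} {i j : ι} {h : C.X i ⟶ E.X j}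
    (hh : φ.f i ≫ h = h ≫ ψ.f j) : (kernel.ι φ).f i ≫ h ≫ ψ.f j = 0 := by
  rw [← hh, ← HomologicalComplex.comp_f_assoc, kernel.condition, HomologicalComplex.zero_f,
    zero_comp]

lemma nonempty_homotopyEquiv_kernel_of_mem_equivariantPairs {e : HomotopyEquiv C E} {φ : End C}
    {ψ : End E} (h : (φ, ψ) ∈ equivariantPairs e) :
    Nonempty (HomotopyEquiv (kernel φ) (kernel ψ)) := by
  obtain ⟨hom_comm, inv_comm, left_comm, right_comm⟩ := mem_equivariantPairs.1 h
  exact nonempty_homotopyEquiv_kernel e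
    (kernel_ι_comp_comp_eq_zero hom_comm) (kernel_ι_comp_comp_eq_zero inv_comm)
    (fun i j => kernel_ι_f_comp_comp_eq_zero (left_comm i j))
    (fun i j => kernel_ι_f_comp_comp_eq_zero (right_comm i j))

lemma biprod_desc_kernel_ι_f_comp_eq_zero {φ φ' : C ⟶ C} {ψ ψ' : E ⟶ E} {i j : ι}
    {h : C.X i ⟶ E.X j} (hh : φ.f i ≫ h = h ≫ ψ.f j) (hh' : φ'.f i ≫ h = h ≫ ψ'.f j) :
    (biprod.desc (kernel.ι φ) (kernel.ι φ')).f i ≫ h ≫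
      (cokernel.π (biprod.desc (kernel.ι ψ) (kernel.ι ψ'))).f j = 0 := by
  apply biprod_desc_f_comp_eq_zero <;> rw [← Category.assoc]
  · exact comp_f_eq_zero_of_kernel_ι_comp_eq_zero (left_comp_cokernel_π_biprod_desc _ _)
      (by rw [Category.assoc, kernel_ι_f_comp_comp_eq_zero hh])
  · exact comp_f_eq_zero_of_kernel_ι_comp_eq_zero (right_comp_cokernel_π_biprod_desc _ _)
      (by rw [Category.assoc, kernel_ι_f_comp_comp_eq_zero hh'])

lemma biprod_desc_kernel_ι_comp_eq_zero {φ φ' : C ⟶ C} {ψ ψ' : E ⟶ E} {f : C ⟶ E}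
    (hf : f ≫ ψ = φ ≫ f) (hf' : f ≫ ψ' = φ' ≫ f) :
    biprod.desc (kernel.ι φ) (kernel.ι φ') ≫ f ≫
      cokernel.π (biprod.desc (kernel.ι ψ) (kernel.ι ψ')) = 0 := by
  ext i : 1
  have hfi : φ.f i ≫ f.f i = f.f i ≫ ψ.f i := by simp only [← HomologicalComplex.comp_f, hf]
  have hfi' : φ'.f i ≫ f.f i = f.f i ≫ ψ'.f i := by simp only [← HomologicalComplex.comp_f, hf']
  exact biprod_desc_kernel_ι_f_comp_eq_zero hfi hfi'

lemma nonempty_homotopyEquiv_kernelSumQuotient_of_mem_equivariantPairs {e : HomotopyEquiv C E}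
    {φ φ' : End C} {ψ ψ' : End E} (h : (φ, ψ) ∈ equivariantPairs e)
    (h' : (φ', ψ') ∈ equivariantPairs e) :
    Nonempty (HomotopyEquiv (kernelSumQuotient φ φ') (kernelSumQuotient ψ ψ')) := by
  obtain ⟨hom_comm, inv_comm, left_comm, right_comm⟩ := mem_equivariantPairs.1 h
  obtain ⟨hom_comm', inv_comm', left_comm', right_comm'⟩ := mem_equivariantPairs.1 h'
  exact nonempty_homotopyEquiv_cokernel e
    (biprod_desc_kernel_ι_comp_eq_zero hom_comm hom_comm')
    (biprod_desc_kernel_ι_comp_eq_zero inv_comm inv_comm')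
    (fun i j => biprod_desc_kernel_ι_f_comp_eq_zero (left_comm i j) (left_comm' i j))
    (fun i j => biprod_desc_kernel_ι_f_comp_eq_zero (right_comm i j) (right_comm' i j))

end Abelian

end Equivariance

section ComplementaryEndomorphisms

lemma exists_geom_sum_eq_natCast_add_mul {R : Type*} [Ring R] (p : ℕ) (s : R) :
    ∃ t, ∑ k ∈ Finset.range p, s ^ k = p + t * (s - 1) :=
  ⟨∑ k ∈ Finset.range p, ∑ j ∈ Finset.range k, s ^ j, by
    rw [Finset.sum_mul]
    simp [geom_sum_mul]⟩

/-- Endomorphisms `φ` and `ψ` of `X` with `ψ ≫ φ = 0` and `n ≡ ψ` modulo the multiples of `φ`.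
The example in view is `φ = σ - 1`, `ψ = P(σ)` and `n = p`, when `σ ^ p = 1`. -/
structure IsComplementary {V : Type*} [Category* V] [Preadditive V] {X : V} (n : ℕ)
    (φ ψ : X ⟶ X) : Prop where
  comp_eq_zero : ψ ≫ φ = 0
  exists_eq_add : ∃ t, ψ = n • 𝟙 X + φ ≫ t

namespace IsComplementary

section Preadditive

variable {V : Type*} [Category* V] [Preadditive V] {X : V}

lemma sub_one_geom_sum {p : ℕ} {σ : End X} (hσ : σ ^ p = 1) :
    IsComplementary p (σ - 1 : End X) (∑ k ∈ Finset.range p, σ ^ k : End X) where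
  comp_eq_zero := by
    change (σ - 1) * ∑ k ∈ Finset.range p, σ ^ k = 0
    rw [mul_geom_sum, hσ, sub_self]
  exists_eq_add := by
    obtain ⟨t, ht⟩ := exists_geom_sum_eq_natCast_add_mul p σ
    rw [← nsmul_one] at ht
    exact ⟨t, ht⟩

variable {n : ℕ} {φ ψ : X ⟶ X}

lemma comp_self (h : IsComplementary n φ ψ) : ψ ≫ ψ = n • ψ := by
  obtain ⟨t, ht⟩ := h.exists_eq_add
  nth_rw 2 [ht]
  rw [Preadditive.comp_add, reassoc_of% h.comp_eq_zero]
  simp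

lemma sub_comp (h : IsComplementary n φ ψ) : (n • 𝟙 X - ψ) ≫ ψ = 0 := by
  simp [h.comp_self]

end Preadditive

section Abelian

variable {V : Type*} [Category* V] [Abelian V] {X : V} {n : ℕ} {φ ψ : X ⟶ X}

lemma exists_retraction_kernel_left (h : IsComplementary n φ ψ) :
    ∃ r : X ⟶ kernel φ, kernel.ι φ ≫ r = n • 𝟙 (kernel φ) := by
  obtain ⟨t, ht⟩ := h.exists_eq_add
  refine ⟨kernel.lift φ ψ h.comp_eq_zero, ?_⟩
  rw [← cancel_mono (kernel.ι φ), Category.assoc, kernel.lift_ι, ht, Preadditive.comp_add,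
    kernel.condition_assoc]
  simp

lemma exists_retraction_kernel_right (h : IsComplementary n φ ψ) :
    ∃ r : X ⟶ kernel ψ, kernel.ι ψ ≫ r = n • 𝟙 (kernel ψ) := by
  refine ⟨kernel.lift ψ (n • 𝟙 X - ψ) h.sub_comp, ?_⟩
  rw [← cancel_mono (kernel.ι ψ), Category.assoc, kernel.lift_ι, Preadditive.comp_sub,
    kernel.condition]
  simp

lemma nsmul_id_kernelSumQuotient (h : IsComplementary n φ ψ) :
    n • 𝟙 (kernelSumQuotient φ ψ) = 0 := by
  let π : X ⟶ kernelSumQuotient φ ψ := cokernel.π _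
  have hψ : ψ ≫ π = 0 := comp_eq_zero_of_kernel_ι_comp_eq_zero
    (left_comp_cokernel_π_biprod_desc _ _) h.comp_eq_zero
  have hsub : (n • 𝟙 X - ψ) ≫ π = 0 := comp_eq_zero_of_kernel_ι_comp_eq_zero
    (right_comp_cokernel_π_biprod_desc _ _) h.sub_comp
  rw [Preadditive.sub_comp, hψ, sub_zero, Preadditive.nsmul_comp, Category.id_comp] at hsub
  rw [← cancel_epi π, Preadditive.comp_nsmul, Category.comp_id, hsub, comp_zero]

end Abelian

end IsComplementary

end ComplementaryEndomorphisms

section Finiteness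

open HomologicalComplex
open scoped nonZeroDivisors

universe u v

variable {ι : Type*} {c : ComplexShape ι}

lemma isTorsion_of_subsingleton_tensorProduct {R : Type*} (K : Type*) {M : Type*} [CommRing R]
    [CommRing K] [Algebra R K] [IsFractionRing R K] [AddCommGroup M] [Module R M]
    (h : Subsingleton (TensorProduct R M K)) : Module.IsTorsion R M := by
  have : Subsingleton (TensorProduct R K M) := (TensorProduct.comm R K M).toEquiv.subsingleton
  intro x
  obtain ⟨r, hr, hrx⟩ :=
    (IsLocalizedModule.subsingleton_iff R⁰ (TensorProduct.mk R K M 1)).1 this x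
  exact ⟨⟨r, hr⟩, hrx⟩

lemma isTorsion_homology_of_isZero_homology_tensorRight {R K : Type u} [CommRing R] [CommRing K]
    [Algebra R K] [IsFractionRing R K] (C : HomologicalComplex (ModuleCat.{u} R) c) (i : ι)
    (h : IsZero ((((tensorRight (ModuleCat.of R K)).mapHomologicalComplex c).obj C).homology i)) :
    Module.IsTorsion R (C.homology i) := by
  have : Module.Flat R (ModuleCat.of R K) := IsLocalization.flat K R⁰
  have e := (C.sc i).mapHomologyIso (tensorRight (ModuleCat.of R K))
  exact isTorsion_of_subsingleton_tensorProduct K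
    (ModuleCat.subsingleton_of_isZero (h.of_iso e.symm))

lemma moduleFinite_homology {R : Type u} [Ring R] [IsNoetherianRing R]
    (C : HomologicalComplex (ModuleCat.{v} R) c) (i : ι) [Module.Finite R (C.X i)] :
    Module.Finite R (C.homology i) :=
  have : Module.Finite R (C.cycles i) := Module.Finite.of_injective (C.iCycles i).hom
    ((ModuleCat.mono_iff_injective _).1 inferInstance)
  Module.Finite.of_surjective (C.homologyπ i).hom ((ModuleCat.epi_iff_surjective _).1 inferInstance)

lemma moduleFinite_kernel_X {R : Type u} [Ring R] [IsNoetherianRing R]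
    {C D : HomologicalComplex (ModuleCat.{v} R) c} (φ : C ⟶ D) (i : ι) [Module.Finite R (C.X i)] :
    Module.Finite R ((kernel φ).X i) :=
  Module.Finite.of_injective ((kernel.ι φ).f i).hom
    ((ModuleCat.mono_iff_injective _).1 inferInstance)

lemma moduleFinite_cokernel_X {R : Type u} [Ring R]
    {C D : HomologicalComplex (ModuleCat.{v} R) c} (φ : C ⟶ D) (i : ι) [Module.Finite R (D.X i)] :
    Module.Finite R ((cokernel φ).X i) :=
  Module.Finite.of_surjective ((cokernel.π φ).f i).hom
    ((ModuleCat.epi_iff_surjective _).1 inferInstance)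

lemma isTorsion_homology_of_comp_eq_nsmul_id {R : Type u} [CommRing R]
    {C D : HomologicalComplex (ModuleCat.{v} R) c} {a : C ⟶ D} {b : D ⟶ C} {n : ℕ}
    (hn : (n : R) ∈ R⁰) (hab : a ≫ b = n • 𝟙 C) {i : ι} (hD : Module.IsTorsion R (D.homology i)) :
    Module.IsTorsion R (C.homology i) := by
  intro x
  have hba : homologyMap b i (homologyMap a i x) = (n : R) • x := by
    have hmap : homologyMap (n • 𝟙 C) i = n • 𝟙 (C.homology i) := by
      rw [← homologyMap_id]
      exact (homologyFunctor (ModuleCat R) c i).map_nsmul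
    rw [← ModuleCat.comp_apply, ← homologyMap_comp, hab, hmap, Nat.cast_smul_eq_nsmul]
    simp
  obtain ⟨q, hq⟩ := @hD (homologyMap a i x)
  refine ⟨q * ⟨n, hn⟩, ?_⟩
  change ((q : R) * n) • x = 0
  rw [mul_smul, ← hba, ← map_smul]
  exact (congrArg _ hq).trans (map_zero _)

lemma finite_homology_of_comp_eq_nsmul_id {C D : HomologicalComplex (ModuleCat ℤ) c} {a : C ⟶ D}
    {b : D ⟶ C} {n : ℕ} (hn : n ≠ 0) (hab : a ≫ b = n • 𝟙 C) {i : ι} [Module.Finite ℤ (C.X i)]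
    (hD : Module.IsTorsion ℤ (D.homology i)) : Finite (C.homology i) :=
  have := moduleFinite_homology C i
  Module.finite_of_fg_torsion _ (isTorsion_homology_of_comp_eq_nsmul_id
    (mem_nonZeroDivisors_of_ne_zero (Nat.cast_ne_zero.2 hn)) hab hD)

open scoped ZeroObject in
lemma finite_homology_of_nsmul_id_eq_zero {C : HomologicalComplex (ModuleCat ℤ) c} {n : ℕ}
    (hn : n ≠ 0) (hC : n • 𝟙 C = 0) (i : ι) [Module.Finite ℤ (C.X i)] : Finite (C.homology i) := by
  have : Subsingleton ((0 : HomologicalComplex (ModuleCat ℤ) c).homology i) :=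
    ModuleCat.subsingleton_of_isZero
      ((homologyFunctor (ModuleCat ℤ) c i).map_isZero (isZero_zero _))
  exact finite_homology_of_comp_eq_nsmul_id (D := 0) (a := 0) (b := 0) hn
    (by rw [hC, comp_zero]) fun x => ⟨1, Subsingleton.elim _ _⟩

variable {C : HomologicalComplex (ModuleCat ℤ) c} {n : ℕ} {φ ψ : C ⟶ C} {i : ι}

lemma IsComplementary.finite_homology_kernel_left (h : IsComplementary n φ ψ) (hn : n ≠ 0)
    [Module.Finite ℤ (C.X i)] (hC : Module.IsTorsion ℤ (C.homology i)) :
    Finite ((kernel φ).homology i) :=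
  have ⟨_, hr⟩ := h.exists_retraction_kernel_left
  have := moduleFinite_kernel_X φ i
  finite_homology_of_comp_eq_nsmul_id hn hr hC

lemma IsComplementary.finite_homology_kernel_right (h : IsComplementary n φ ψ) (hn : n ≠ 0)
    [Module.Finite ℤ (C.X i)] (hC : Module.IsTorsion ℤ (C.homology i)) :
    Finite ((kernel ψ).homology i) :=
  have ⟨_, hr⟩ := h.exists_retraction_kernel_right
  have := moduleFinite_kernel_X ψ i
  finite_homology_of_comp_eq_nsmul_id hn hr hC

lemma IsComplementary.finite_homology_kernelSumQuotient (h : IsComplementary n φ ψ) (hn : n ≠ 0)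
    [Module.Finite ℤ (C.X i)] : Finite ((kernelSumQuotient φ ψ).homology i) :=
  have : Module.Finite ℤ ((kernelSumQuotient φ ψ).X i) := moduleFinite_cokernel_X _ i
  finite_homology_of_nsmul_id_eq_zero hn h.nsmul_id_kernelSumQuotient i

end Finiteness

section ReidemeisterTorsion

lemma finite_homology_and_Hcard_eq_of_homotopyEquiv {X Y : CochainComplex (ModuleCat ℤ) ℤ}
    (h : Nonempty (HomotopyEquiv X Y)) (i : ℤ) [Finite (X.homology i)] :
    Finite (Y.homology i) ∧ Hcard i X = Hcard i Y :=
  let e := (h.some.toHomologyIso i).toLinearEquiv.toEquiv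
  ⟨Finite.of_equiv _ e, Nat.card_congr e⟩

theorem stmt_7_general (p : ℕ) (hp : p ≠ 0) (C E : CochainComplex (ModuleCat ℤ) ℤ)
    (hCfg : ∀ i : ℤ, Module.Finite ℤ (C.X i))
    (hCacyc : ∀ i : ℤ, IsZero ((tensorQ C).homology i))
    (σC : End C) (σE : End E) (hσC : σC ^ p = 1)
    (e : HomotopyEquiv C E) (he : (σC, σE) ∈ equivariantPairs e) (i : ℤ) :
    (Finite ((fixCx C σC).homology i) ∧ Finite ((cycCx p C σC).homology i) ∧
      Finite ((quotCx p C σC).homology i) ∧ Finite ((fixCx E σE).homology i) ∧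
      Finite ((cycCx p E σE).homology i) ∧ Finite ((quotCx p E σE).homology i)) ∧
    Hcard i (fixCx C σC) = Hcard i (fixCx E σE) ∧
    Hcard i (cycCx p C σC) = Hcard i (cycCx p E σE) ∧
    Hcard i (quotCx p C σC) = Hcard i (quotCx p E σE) := by
  have hsub : (σC - 1, σE - 1) ∈ equivariantPairs e := sub_mem he (one_mem _)
  have hgeom : (∑ k ∈ Finset.range p, σC ^ k, ∑ k ∈ Finset.range p, σE ^ k) ∈
      equivariantPairs e := by
    simpa only [Prod.pow_mk, prod_mk_sum] using
      sum_mem fun k (_ : k ∈ Finset.range p) => pow_mem he k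
  have hσ := IsComplementary.sub_one_geom_sum hσC
  have htors : Module.IsTorsion ℤ (C.homology i) :=
    isTorsion_homology_of_isZero_homology_tensorRight C i (hCacyc i)
  have hfix : Finite ((fixCx C σC).homology i) := hσ.finite_homology_kernel_left hp htors
  have hcyc : Finite ((cycCx p C σC).homology i) := hσ.finite_homology_kernel_right hp htors
  have hquot : Finite ((quotCx p C σC).homology i) := hσ.finite_homology_kernelSumQuotient hp
  obtain ⟨hfix', fix_eq⟩ := finite_homology_and_Hcard_eq_of_homotopyEquiv
    (X := fixCx C σC) (nonempty_homotopyEquiv_kernel_of_mem_equivariantPairs hsub) i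
  obtain ⟨hcyc', cyc_eq⟩ := finite_homology_and_Hcard_eq_of_homotopyEquiv
    (X := cycCx p C σC) (nonempty_homotopyEquiv_kernel_of_mem_equivariantPairs hgeom) i
  obtain ⟨hquot', quot_eq⟩ := finite_homology_and_Hcard_eq_of_homotopyEquiv (X := quotCx p C σC)
    (nonempty_homotopyEquiv_kernelSumQuotient_of_mem_equivariantPairs hsub hgeom) i
  exact ⟨⟨hfix, hcyc, hquot, hfix', hcyc', hquot'⟩, fix_eq, cyc_eq, quot_eq⟩

end ReidemeisterTorsion

/-- Let p be a prime and C, E bounded, rationally acyclic cochain complexes of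
finitely generated free abelian groups with chain automorphisms σ satisfying σ^p = id, and
suppose there are σ-commuting chain maps f : C → E, g : E → C mutually inverse up to
σ-commuting chain homotopies.  Then the naive equivariant Reidemeister torsions agree:
Σ_i (−1)^i [(p−1)log|H^i(C^{σ−1})| − log|H^i(C^{P(σ)})| + (p−1)log|H^i(C')|]
  = Σ_i (−1)^i [(p−1)log|H^i(E^{σ−1})| − log|H^i(E^{P(σ)})| + (p−1)log|H^i(E')|],
where all the cohomology groups appearing are finite. -/
theorem stmt_7 (p : ℕ) (hp : p.Prime)
    (C E : CochainComplex (ModuleCat ℤ) ℤ)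
    (hCbd : ∃ N : ℕ, ∀ i : ℤ, (N : ℤ) ≤ |i| → IsZero (C.X i))
    (hEbd : ∃ N : ℕ, ∀ i : ℤ, (N : ℤ) ≤ |i| → IsZero (E.X i))
    (hCfree : ∀ i : ℤ, Module.Free ℤ (C.X i)) (hCfg : ∀ i : ℤ, Module.Finite ℤ (C.X i))
    (hEfree : ∀ i : ℤ, Module.Free ℤ (E.X i)) (hEfg : ∀ i : ℤ, Module.Finite ℤ (E.X i))
    (hCacyc : ∀ i : ℤ, IsZero
      ((HomologicalComplex.homologyFunctor (ModuleCat ℤ) (ComplexShape.up ℤ) i).obj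
        (tensorQ C)))
    (hEacyc : ∀ i : ℤ, IsZero
      ((HomologicalComplex.homologyFunctor (ModuleCat ℤ) (ComplexShape.up ℤ) i).obj
        (tensorQ E)))
    (σC : End C) (σE : End E) (hσC : σC ^ p = 1) (hσE : σE ^ p = 1)
    (f : C ⟶ E) (g : E ⟶ C)
    (hfσ : f ≫ σE = σC ≫ f) (hgσ : g ≫ σC = σE ≫ g)
    (hgf : ∃ h : Homotopy (f ≫ g) (𝟙 C),
      ∀ i j : ℤ, (σC : C ⟶ C).f i ≫ h.hom i j = h.hom i j ≫ (σC : C ⟶ C).f j)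
    (hfg : ∃ h : Homotopy (g ≫ f) (𝟙 E),
      ∀ i j : ℤ, (σE : E ⟶ E).f i ≫ h.hom i j = h.hom i j ≫ (σE : E ⟶ E).f j) :
    (∀ i : ℤ,
      Finite ((HomologicalComplex.homologyFunctor (ModuleCat ℤ) (ComplexShape.up ℤ) i).obj
        (fixCx C σC)) ∧
      Finite ((HomologicalComplex.homologyFunctor (ModuleCat ℤ) (ComplexShape.up ℤ) i).obj
        (cycCx p C σC)) ∧
      Finite ((HomologicalComplex.homologyFunctor (ModuleCat ℤ) (ComplexShape.up ℤ) i).obj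
        (quotCx p C σC)) ∧
      Finite ((HomologicalComplex.homologyFunctor (ModuleCat ℤ) (ComplexShape.up ℤ) i).obj
        (fixCx E σE)) ∧
      Finite ((HomologicalComplex.homologyFunctor (ModuleCat ℤ) (ComplexShape.up ℤ) i).obj
        (cycCx p E σE)) ∧
      Finite ((HomologicalComplex.homologyFunctor (ModuleCat ℤ) (ComplexShape.up ℤ) i).obj
        (quotCx p E σE))) ∧
    nrt p C σC = nrt p E σE := by
  obtain ⟨hleft, hleft_comm⟩ := hgf
  obtain ⟨hright, hright_comm⟩ := hfg
  have key := stmt_7_general p hp.ne_zero C E hCfg hCacyc σC σE hσC ⟨f, g, hleft, hright⟩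
    (mem_equivariantPairs.2 ⟨hfσ, hgσ, hleft_comm, hright_comm⟩)
  exact ⟨fun i => (key i).1, finsum_congr fun i => by
    rw [(key i).2.1, (key i).2.2.1, (key i).2.2.2]⟩
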